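/- arXiv:1609.00404 — 5 statements merged into one kernel-verified Lean document; each statement's English description precedes it below -/
import Mathlib

section
/- Let q = 2, P = (1/2, 1/2) ∈ Δ_2, and R = (1/4, 1/4, 1/2, 0) ∈ Δ_4 with conditionals Q_{|1} = (1/2, 1/2) and Q_{|2} = (1, 0). Then D̃_4(R) ≠ D̃_2(P) ⊕_2 h(Σ_{i=1}^2 p_i^{(2)} h⁻¹(D̃_2(Q_{|i}))), where D̃_n(P) = h(−Σ_k p_k^{(2)} log₂ p_k). Hence the entropy D̃ proposed in [Jizba–Korbel 2016] violates the generalized Shannon–Khinchin axiom [A4] for q = 2. -/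
/-!
At `q = 2` one has `h(x) = 1 - 2^(-x)`, which turns ordinary addition into `⊕₂`. Since `h⁻¹`
undoes `h`, the chain rule [A4] would therefore force
`S̃(R) = S̃(P) + ∑ᵢ pᵢ^{(2)} S̃(Q_{|i})` for the Aczél–Daróczy entropy `S̃`. The escort distribution
of `R` is `(1/6, 1/6, 2/3, 0)`, so the left side is `4/3`, whereas the right side is
`1 + (1/2 · 1 + 1/2 · 0) = 3/2`; `h` is injective, so [A4] fails.
-/

open Real BigOperators

noncomputable section

/-- The `⊕_q`-addition: `u ⊕_q v = u + v + (1-q)·u·v`. -/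
def opq (q u v : ℝ) : ℝ := u + v + (1 - q) * u * v

/-- `h(x) = x` for `q = 1`, and `h(x) = (2^{(1-q)x} - 1)/(1-q)` for `q ≠ 1`. -/
def hfun (q x : ℝ) : ℝ := if q = 1 then x else ((2:ℝ) ^ ((1 - q) * x) - 1) / (1 - q)

/-- `h⁻¹(x) = x` for `q = 1`, and `h⁻¹(x) = (1/(1-q))·log₂((1-q)x + 1)` for `q ≠ 1`. -/
def hfunInv (q x : ℝ) : ℝ := if q = 1 then x else (1 / (1 - q)) * Real.logb 2 ((1 - q) * x + 1)

/-- A probability distribution: nonnegative components summing to 1. -/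
def IsDistribution {α : Type*} [Fintype α] (p : α → ℝ) : Prop :=
  (∀ k, 0 ≤ p k) ∧ ∑ k, p k = 1

/-- The `q`-escort distribution: `p_k^{(q)} = p_k^q / ∑_i p_i^q` (real powers, `0^q = 0`). -/
def escort (q : ℝ) {α : Type*} [Fintype α] (p : α → ℝ) (k : α) : ℝ :=
  p k ^ q / ∑ i, p i ^ q

/-- The Jizba–Korbel entropy `D̃(P) = h(−Σ_k p_k^{(q)} log₂ p_k)`. -/
def Djk (q : ℝ) {α : Type*} [Fintype α] (p : α → ℝ) : ℝ :=
  hfun q (-∑ k, escort q p k * Real.logb 2 (p k))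

lemma hfun_two (x : ℝ) : hfun 2 x = 1 - (2:ℝ) ^ (-x) := by
  have e : (1 - 2 : ℝ) * x = -x := by ring
  rw [hfun, if_neg (by norm_num), e]
  ring

lemma hfunInv_hfun_two (x : ℝ) : hfunInv 2 (hfun 2 x) = x := by
  have e : (1 - 2 : ℝ) * (1 - (2:ℝ) ^ (-x)) + 1 = (2:ℝ) ^ (-x) := by ring
  rw [hfun_two, hfunInv, if_neg (by norm_num), e, Real.logb_rpow (by norm_num) (by norm_num)]
  ring

/-- `h` carries ordinary addition to `⊕₂`. -/
lemma opq_hfun_two (x y : ℝ) : opq 2 (hfun 2 x) (hfun 2 y) = hfun 2 (x + y) := by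
  simp only [hfun_two, opq, neg_add, Real.rpow_add (zero_lt_two : (0:ℝ) < 2)]
  ring

lemma hfun_two_injective : Function.Injective (hfun 2) :=
  Function.LeftInverse.injective hfunInv_hfun_two

lemma logb_two_half : Real.logb 2 (1 / 2) = -1 := by
  rw [one_div, Real.logb_inv, Real.logb_self_eq_one (by norm_num)]

lemma logb_two_quarter : Real.logb 2 (1 / 4) = -2 := by
  rw [show (1 / 4 : ℝ) = (1 / 2) ^ 2 by norm_num, Real.logb_pow, logb_two_half]
  norm_num

lemma Djk_uniform : Djk 2 (![1 / 2, 1 / 2] : Fin 2 → ℝ) = hfun 2 1 := by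
  rw [Djk]
  congr 1
  simp only [escort, Fin.sum_univ_two, Matrix.cons_val_zero, Matrix.cons_val_one, Real.rpow_two,
    logb_two_half]
  norm_num

lemma Djk_degenerate : Djk 2 (![1, 0] : Fin 2 → ℝ) = hfun 2 0 := by
  rw [Djk]
  congr 1
  simp [escort, Fin.sum_univ_two]

lemma Djk_joint :
    Djk 2 (fun x : Fin 2 × Fin 2 => (![![1/4, 1/4], ![1/2, 0]] : Fin 2 → Fin 2 → ℝ) x.1 x.2) =
      hfun 2 (4 / 3) := by
  rw [Djk]
  congr 1
  simp only [escort, Fintype.sum_prod_type, Fin.sum_univ_two, Matrix.cons_val_zero,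
    Matrix.cons_val_one, Real.rpow_two, logb_two_half, logb_two_quarter, Real.logb_zero]
  norm_num

/-- for `q = 2`, `P = (1/2, 1/2)`, `R = (1/4, 1/4; 1/2, 0)` with
conditionals `Q_{|1} = (1/2, 1/2)`, `Q_{|2} = (1, 0)`, the Jizba–Korbel entropy
violates the generalized Shannon–Khinchin axiom [A4]:
`D̃_4(R) ≠ D̃_2(P) ⊕_2 h(Σ_i p_i^{(2)} h⁻¹(D̃_2(Q_{|i})))`. -/
theorem stmt3 :
    ∀ (r : Fin 2 → Fin 2 → ℝ), r = ![![1/4, 1/4], ![1/2, 0]] →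
    ∀ (p : Fin 2 → ℝ), p = ![1/2, 1/2] →
    ∀ (qc : Fin 2 → Fin 2 → ℝ), (∀ i j, qc i j = r i j / p i) →
    Djk 2 (fun x : Fin 2 × Fin 2 => r x.1 x.2) ≠
      opq 2 (Djk 2 p) (hfun 2 (∑ i, escort 2 p i * hfunInv 2 (Djk 2 (qc i)))) := by
  rintro r rfl p rfl qc hqc
  have h0 : qc 0 = ![1 / 2, 1 / 2] := by
    funext j
    fin_cases j <;> norm_num [hqc]
  have h1 : qc 1 = ![1, 0] := by
    funext j
    fin_cases j <;> norm_num [hqc]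
  have e : ∀ i, escort 2 (![1 / 2, 1 / 2] : Fin 2 → ℝ) i = 1 / 2 := by
    intro i
    fin_cases i <;> norm_num [escort, Fin.sum_univ_two]
  rw [Djk_joint, Djk_uniform, Fin.sum_univ_two, h0, h1, Djk_uniform, Djk_degenerate, e, e,
    hfunInv_hfun_two, hfunInv_hfun_two, opq_hfun_two]
  intro h
  have := hfun_two_injective h
  norm_num at this
end
end

section
/- Let q > 0, q ≠ 1, τ < 0, and define D_n(P) = ((Σ_{k=1}^n p_k^q)^{−τ} − 1)/(1−q) for P ∈ Δ_n, and f_h(x) = ((1−q)x + 1)^{−1/τ}. Then for every n, m > 1, every joint distribution PQ = (r_{ij}) ∈ Δ_{nm} with strictly positive marginals p_i = Σ_j r_{ij} and conditionals q_{j|i} = r_{ij}/p_i, the chain rule D_{nm}(PQ) = D_n(P) ⊕_q f_h⁻¹(Σ_{i=1}^n p_i^{(q)} f_h(D_m(Q_{|i}))) holds, where P = (p_1, …, p_n) and Q_{|i} = (q_{1|i}, …, q_{m|i}). -/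
/-!
The map `f_h` recovers the power sum from the entropy: `f_h (D(P)) = ∑ p_k ^ q` (`fh_Dcorr`).
Writing `p_i` for the marginals, the escort average of the conditional power sums is therefore
`∑ i, (p_i ^ q / ∑ p ^ q) * ∑ j, (r_ij / p_i) ^ q = (∑ r_ij ^ q) / ∑ p_i ^ q`.
Both entropies on the right of the chain rule are of the form `(x - 1) / (1 - q)`, and `⊕_q` turns
such expressions into products: `(x - 1)/(1 - q) ⊕_q (y - 1)/(1 - q) = (x y - 1)/(1 - q)`. With
`x = (∑ p_i ^ q) ^ (-τ)` and `y = ((∑ r_ij ^ q) / ∑ p_i ^ q) ^ (-τ)` the product is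
`(∑ r_ij ^ q) ^ (-τ)`.
-/

open Real BigOperators

noncomputable section

/-- The corrected entropy (for `q ≠ 1`): `D(P) = ((Σ_k p_k^q)^{−τ} − 1)/(1−q)`. -/
def Dcorr (q τ : ℝ) {α : Type*} [Fintype α] (p : α → ℝ) : ℝ :=
  ((∑ k, p k ^ q) ^ (-τ) - 1) / (1 - q)

/-- `f_h(x) = ((1−q)x + 1)^{−1/τ}`. -/
def fh (q τ x : ℝ) : ℝ := ((1 - q) * x + 1) ^ (-(1 / τ))

/-- The inverse of `f_h`: `f_h⁻¹(y) = (y^{−τ} − 1)/(1−q)`. -/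
def fhInv (q τ y : ℝ) : ℝ := (y ^ (-τ) - 1) / (1 - q)

/-- Since `f_h⁻¹` is inverse to `f_h` on nonnegative arguments, `f_h` recovers the power sum from
the entropy: `D(P)` is `f_h⁻¹` of the power sum. -/
lemma fh_Dcorr {q τ : ℝ} (hq1 : q ≠ 1) (hτ : τ ≠ 0) {α : Type*} [Fintype α] {p : α → ℝ}
    (hp : ∀ k, 0 ≤ p k) : fh q τ (Dcorr q τ p) = ∑ k, p k ^ q := by
  have h1 : 1 - q ≠ 0 := sub_ne_zero.mpr hq1.symm
  have hS : 0 ≤ ∑ k, p k ^ q := Finset.sum_nonneg fun k _ => Real.rpow_nonneg (hp k) q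
  have he : -τ * -(1 / τ) = 1 := by field_simp
  rw [fh, Dcorr, mul_div_cancel₀ _ h1, sub_add_cancel, ← Real.rpow_mul hS, he, Real.rpow_one]

/-- for `q > 0`, `q ≠ 1`, `τ < 0`, the corrected entropy satisfies the
chain rule [A4]: for every joint distribution `(r_{ij}) ∈ Δ_{nm}` with strictly
positive marginals `p_i = Σ_j r_{ij}` and conditionals `q_{j|i} = r_{ij}/p_i`,
`D_{nm}(PQ) = D_n(P) ⊕_q f_h⁻¹(Σ_i p_i^{(q)} f_h(D_m(Q_{|i})))`. -/
theorem stmt4 (q τ : ℝ) (hq0 : 0 < q) (hq1 : q ≠ 1) (hτ : τ < 0)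
    (n m : ℕ) (hn : 1 < n) (hm : 1 < m)
    (r : Fin n → Fin m → ℝ) (hr : ∀ i j, 0 ≤ r i j)
    (hsum : ∑ i, ∑ j, r i j = 1) (hpos : ∀ i, 0 < ∑ j, r i j) :
    Dcorr q τ (fun x : Fin n × Fin m => r x.1 x.2) =
      opq q (Dcorr q τ (fun i => ∑ j, r i j))
        (fhInv q τ (∑ i, escort q (fun i' => ∑ j, r i' j) i *
          fh q τ (Dcorr q τ (fun j => r i j / ∑ j', r i j')))) := by
  have h1 : 1 - q ≠ 0 := sub_ne_zero.mpr hq1.symm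
  have hB : 0 < ∑ i, (∑ j, r i j) ^ q :=
    Finset.sum_pos (fun i _ => Real.rpow_pos_of_pos (hpos i) q) ⟨⟨0, by omega⟩, Finset.mem_univ _⟩
  have hA : 0 ≤ ∑ i, ∑ j, r i j ^ q :=
    Finset.sum_nonneg fun i _ => Finset.sum_nonneg fun j _ => Real.rpow_nonneg (hr i j) q
  have key : ∑ i, escort q (fun i' => ∑ j, r i' j) i *
      fh q τ (Dcorr q τ (fun j => r i j / ∑ j', r i j')) =
      (∑ i, ∑ j, r i j ^ q) / ∑ i, (∑ j, r i j) ^ q := by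
    rw [Finset.sum_div]
    refine Finset.sum_congr rfl fun i _ => ?_
    rw [fh_Dcorr hq1 hτ.ne fun j => div_nonneg (hr i j) (hpos i).le, escort]
    have hp := (Real.rpow_pos_of_pos (hpos i) q).ne'
    simp_rw [Real.div_rpow (hr i _) (hpos i).le]
    rw [← Finset.sum_div]
    field_simp
  have hBτ := (Real.rpow_pos_of_pos hB (-τ)).ne'
  rw [key, fhInv, Real.div_rpow hA hB.le, opq, Dcorr, Dcorr, Fintype.sum_prod_type]
  field_simp
  ring
end
end

section
/- Let q > 0, q ≠ 1, τ < 0, and define N_n(P) = (τ/(q−1))·log₂(Σ_{k=1}^n p_k^q) for P ∈ Δ_n, and f(x) = 2^{(q−1)x/τ}. Then for every joint distribution PQ = (r_{ij}) ∈ Δ_{nm} with strictly positive marginals p_i = Σ_j r_{ij} and conditionals q_{j|i} = r_{ij}/p_i, one has N_{nm}(PQ) − N_n(P) = (τ/(q−1))·log₂(Σ_{i=1}^n p_i^{(q)} Σ_{j=1}^m q_{j|i}^q) = f⁻¹(Σ_{i=1}^n p_i^{(q)} f(N_m(Q_{|i}))). -/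
/-!
With `p_i = ∑_j r_ij`, homogeneity of the `q`-th power gives
`p_i^q * ∑_j (r_ij / p_i)^q = ∑_j r_ij^q`. Summing over `i` and dividing by `∑_i p_i^q`, the escort
average of the conditional power sums is the ratio `(∑_ij r_ij^q) / (∑_i p_i^q)`, whose logarithm is
the difference of the two entropies (`escort_average`). The second formula follows from the first,
since `f` applied to the Nath entropy recovers the power sum (`fN_Nnath`).
-/

open Real BigOperators

noncomputable section

/-- The Nath entropy (for `q ≠ 1`): `N(P) = (τ/(q−1))·log₂(Σ_k p_k^q)`. -/
def Nnath (q τ : ℝ) {α : Type*} [Fintype α] (p : α → ℝ) : ℝ :=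
  (τ / (q - 1)) * Real.logb 2 (∑ k, p k ^ q)

/-- `f(x) = 2^{(q−1)x/τ}`. -/
def fN (q τ x : ℝ) : ℝ := (2:ℝ) ^ ((q - 1) * x / τ)

/-- The inverse of `f`: `f⁻¹(y) = (τ/(q−1))·log₂ y`. -/
def fNInv (q τ y : ℝ) : ℝ := (τ / (q - 1)) * Real.logb 2 y

lemma sum_rpow_pos {α : Type*} [Fintype α] (q : ℝ) (p : α → ℝ) (hp : ∀ k, 0 ≤ p k)
    (h : 0 < ∑ k, p k) : 0 < ∑ k, p k ^ q := by
  obtain ⟨k, hk, hk'⟩ := Finset.exists_lt_of_sum_lt (s := Finset.univ)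
    (f := fun _ : α => (0 : ℝ)) (g := p) (by simpa using h)
  exact Finset.sum_pos' (fun i _ => Real.rpow_nonneg (hp i) q) ⟨k, hk, Real.rpow_pos_of_pos hk' q⟩

/-- `f` undoes the logarithm in the Nath entropy. -/
lemma fN_Nnath {α : Type*} [Fintype α] (q τ : ℝ) (hq1 : q ≠ 1) (hτ : τ ≠ 0) (p : α → ℝ)
    (h : 0 < ∑ k, p k ^ q) : fN q τ (Nnath q τ p) = ∑ k, p k ^ q := by
  have hq : q - 1 ≠ 0 := sub_ne_zero.mpr hq1
  have e : (q - 1) * Nnath q τ p / τ = Real.logb 2 (∑ k, p k ^ q) := by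
    unfold Nnath
    field_simp
  rw [fN, e, Real.rpow_logb (by norm_num) (by norm_num) h]

/-- The escort average of the conditional power sums is the ratio of the joint power sum to the
marginal one. -/
lemma escort_average {α β : Type*} [Fintype α] [Fintype β] (q : ℝ) (r : α → β → ℝ)
    (hr : ∀ i j, 0 ≤ r i j) (hpos : ∀ i, 0 < ∑ j, r i j) :
    ∑ i, escort q (fun i' => ∑ j, r i' j) i * ∑ j, (r i j / ∑ j', r i j') ^ q =
      (∑ x : α × β, r x.1 x.2 ^ q) / ∑ i, (∑ j, r i j) ^ q := by
  rw [Fintype.sum_prod_type, Finset.sum_div]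
  refine Finset.sum_congr rfl fun i _ => ?_
  have hp : (∑ j, r i j) ^ q ≠ 0 := (Real.rpow_pos_of_pos (hpos i) q).ne'
  simp only [Real.div_rpow (hr i _) (hpos i).le]
  rw [← Finset.sum_div, escort, div_mul_div_comm, mul_comm (∑ i, _) _, mul_div_mul_left _ _ hp]

/-- for `q > 0`, `q ≠ 1`, `τ < 0` and every joint distribution
`(r_{ij}) ∈ Δ_{nm}` with strictly positive marginals `p_i = Σ_j r_{ij}` and
conditionals `q_{j|i} = r_{ij}/p_i`:
`N_{nm}(PQ) − N_n(P) = (τ/(q−1))·log₂(Σ_i p_i^{(q)} Σ_j q_{j|i}^q)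
  = f⁻¹(Σ_i p_i^{(q)} f(N_m(Q_{|i})))`. -/
theorem stmt8 (q τ : ℝ) (hq0 : 0 < q) (hq1 : q ≠ 1) (hτ : τ < 0)
    (n m : ℕ) (hn : 1 < n) (hm : 1 < m)
    (r : Fin n → Fin m → ℝ) (hr : ∀ i j, 0 ≤ r i j)
    (hsum : ∑ i, ∑ j, r i j = 1) (hpos : ∀ i, 0 < ∑ j, r i j) :
    Nnath q τ (fun x : Fin n × Fin m => r x.1 x.2) - Nnath q τ (fun i => ∑ j, r i j) =
      (τ / (q - 1)) * Real.logb 2 (∑ i, escort q (fun i' => ∑ j, r i' j) i *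
        ∑ j, (r i j / ∑ j', r i j') ^ q) ∧
    Nnath q τ (fun x : Fin n × Fin m => r x.1 x.2) - Nnath q τ (fun i => ∑ j, r i j) =
      fNInv q τ (∑ i, escort q (fun i' => ∑ j, r i' j) i *
        fN q τ (Nnath q τ (fun j => r i j / ∑ j', r i j'))) := by
  have hJ : 0 < ∑ x : Fin n × Fin m, r x.1 x.2 ^ q := by
    refine sum_rpow_pos q _ (fun x => hr x.1 x.2) ?_
    rw [Fintype.sum_prod_type, hsum]
    exact one_pos
  have hM : 0 < ∑ i, (∑ j, r i j) ^ q := by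
    refine sum_rpow_pos q _ (fun i => (hpos i).le) ?_
    rw [hsum]
    exact one_pos
  have hcond : ∀ i, fN q τ (Nnath q τ (fun j => r i j / ∑ j', r i j')) =
      ∑ j, (r i j / ∑ j', r i j') ^ q := fun i => by
    refine fN_Nnath q τ hq1 hτ.ne _ (sum_rpow_pos q _ (fun j => ?_) ?_)
    · exact div_nonneg (hr i j) (hpos i).le
    · rw [← Finset.sum_div, div_self (hpos i).ne']
      exact one_pos
  simp only [hcond, fNInv, and_self]
  rw [escort_average q r hr hpos, Real.logb_div hJ.ne' hM.ne', mul_sub]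
  rfl
end
end

section
/- Let q > 0, q ≠ 1, τ < 0, and define g_h(x) = ((1−q)x + 1)^{1/τ}. Then for every n > 1 and every P ∈ Δ_n with strictly positive components, g_h⁻¹(Σ_{k=1}^n p_k^{(q)} g_h(h(τ log₂ p_k))) = ((Σ_{k=1}^n p_k^q)^{−τ} − 1)/(1−q), i.e. the corrected entropy D_n admits the quasi-linear-mean representation D_n(P) = g_h⁻¹(Σ_k p_k^{(q)} g_h(h(τ log₂ p_k))). -/
/-!
The deformation in `h` cancels against the affine map inside `g_h`, so that
`g_h (h (τ log₂ x)) = x ^ (1 - q)` for `x > 0` (lemma `gh_hfun_logb`). Weighted by the escort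
probabilities `p_k ^ q / ∑ i, p_i ^ q`, these values have numerators `p_k ^ q * p_k ^ (1 - q) = p_k`,
which sum to `1`; the escort mean is therefore `(∑ i, p_i ^ q)⁻¹`, and applying `g_h⁻¹` gives the
claim.
-/

open Real BigOperators

noncomputable section

/-- `g_h(x) = ((1−q)x + 1)^{1/τ}`. -/
def gh (q τ x : ℝ) : ℝ := ((1 - q) * x + 1) ^ (1 / τ)

/-- The inverse of `g_h`: `g_h⁻¹(y) = (y^τ − 1)/(1−q)`. -/
def ghInv (q τ y : ℝ) : ℝ := (y ^ τ - 1) / (1 - q)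

/-- On the scaled elementary information `τ log₂ x`, the function `g_h ∘ h` is the power
`x ^ (1 - q)`. -/
theorem gh_hfun_logb {q τ x : ℝ} (hq1 : q ≠ 1) (hτ : τ ≠ 0) (hx : 0 < x) :
    gh q τ (hfun q (τ * Real.logb 2 x)) = x ^ (1 - q) := by
  have h1 : 1 - q ≠ 0 := sub_ne_zero.mpr hq1.symm
  have h2 : (1 - q) * (τ * Real.logb 2 x) = Real.logb 2 x * ((1 - q) * τ) := by ring
  rw [gh, hfun, if_neg hq1, mul_div_cancel₀ _ h1, sub_add_cancel, h2,
    Real.rpow_mul (by norm_num), Real.rpow_logb (by norm_num) (by norm_num) hx,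
    ← Real.rpow_mul hx.le]
  congr 1
  field_simp

/-- The escort mean of `p_k ^ (1 - q)` is the reciprocal of the normalizing sum. -/
theorem sum_escort_mul_rpow {α : Type*} [Fintype α] (q : ℝ) {p : α → ℝ}
    (hp : IsDistribution p) (hpos : ∀ k, 0 < p k) :
    ∑ k, escort q p k * p k ^ (1 - q) = (∑ k, p k ^ q)⁻¹ := by
  have h : ∀ k, escort q p k * p k ^ (1 - q) = p k * (∑ i, p i ^ q)⁻¹ := fun k => by
    rw [escort, div_mul_eq_mul_div, ← Real.rpow_add (hpos k), add_sub_cancel, Real.rpow_one,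
      div_eq_mul_inv]
  simp_rw [h]
  rw [← Finset.sum_mul, hp.2, one_mul]

/-- for `q > 0`, `q ≠ 1`, `τ < 0` and every `P ∈ Δ_n` (`n > 1`) with
strictly positive components, the corrected entropy admits the quasi-linear-mean
representation
`g_h⁻¹(Σ_k p_k^{(q)} g_h(h(τ log₂ p_k))) = ((Σ_k p_k^q)^{−τ} − 1)/(1−q)`. -/
theorem stmt10 (q τ : ℝ) (hq0 : 0 < q) (hq1 : q ≠ 1) (hτ : τ < 0)
    (n : ℕ) (hn : 1 < n) (p : Fin n → ℝ) (hp : IsDistribution p) (hpos : ∀ k, 0 < p k) :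
    ghInv q τ (∑ k, escort q p k * gh q τ (hfun q (τ * Real.logb 2 (p k)))) =
      ((∑ k, p k ^ q) ^ (-τ) - 1) / (1 - q) := by
  have hS : 0 ≤ ∑ k, p k ^ q := Finset.sum_nonneg fun k _ => Real.rpow_nonneg (hpos k).le q
  simp_rw [fun k => gh_hfun_logb hq1 hτ.ne (hpos k)]
  rw [sum_escort_mul_rpow q hp hpos, ghInv, Real.inv_rpow hS, Real.rpow_neg hS]
end
end

section
/- Let q > 0, q ≠ 1, and define D̃_n(P) = h(−Σ_{k=1}^n p_k^{(q)} log₂ p_k) with h(x) = (2^{(1−q)x} − 1)/(1−q). Then for all n, m > 1, P ∈ Δ_n and Q ∈ Δ_m, D̃_{nm}(P ⋆ Q) = D̃_n(P) ⊕_q D̃_m(Q); i.e. the Jizba–Korbel entropy is ⊕_q-additive on independent (product) distributions. -/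
/-!
The escort map is multiplicative: since `(p_i q_j)^q = p_i^q q_j^q`, the escort distribution of a
direct product is the direct product of the escort distributions. Each escort distribution sums
to `1`, so `log₂ (p_i q_j) = log₂ p_i + log₂ q_j` makes the escort-averaged information
`-∑ p_k^{(q)} log₂ p_k` additive on direct products. Finally `h` turns ordinary addition into
`⊕_q`, because `1 + (1-q) h(x) = 2^{(1-q)x}` is multiplicative in `x`.
-/

open Real BigOperators

noncomputable section

/-- The normalising sum of the escort distribution does not vanish, so the escort components
sum to `1`. -/
lemma sum_escort {α : Type*} [Fintype α] (q : ℝ) (p : α → ℝ) (hp : IsDistribution p) :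
    ∑ k, escort q p k = 1 := by
  obtain ⟨hnn, hsum⟩ := hp
  have hex : ∃ k, 0 < p k := by
    by_contra! h
    have : ∑ k, p k ≤ 0 := Finset.sum_nonpos fun k _ => h k
    linarith
  obtain ⟨k, hk⟩ := hex
  have hpos : 0 < ∑ i, p i ^ q :=
    Finset.sum_pos' (fun i _ => Real.rpow_nonneg (hnn i) q)
      ⟨k, Finset.mem_univ k, Real.rpow_pos_of_pos hk q⟩
  simp only [escort, ← Finset.sum_div]
  exact div_self hpos.ne'

lemma escort_prod {α β : Type*} [Fintype α] [Fintype β] (q : ℝ) (p : α → ℝ) (r : β → ℝ)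
    (hp : ∀ i, 0 ≤ p i) (hr : ∀ j, 0 ≤ r j) (x : α × β) :
    escort q (fun y : α × β => p y.1 * r y.2) x = escort q p x.1 * escort q r x.2 := by
  have hmul : ∀ y : α × β, (p y.1 * r y.2) ^ q = p y.1 ^ q * r y.2 ^ q := fun y =>
    Real.mul_rpow (hp y.1) (hr y.2)
  simp only [escort, hmul, Fintype.sum_prod_type, ← Finset.sum_mul_sum]
  rw [mul_div_mul_comm]

lemma escort_eq_zero {α : Type*} [Fintype α] {q : ℝ} (hq : q ≠ 0) {p : α → ℝ} {k : α}
    (hk : p k = 0) : escort q p k = 0 := by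
  simp [escort, hk, Real.zero_rpow hq]

/-- The escort-averaged information content is additive on direct products. -/
lemma sum_escort_logb_prod {α β : Type*} [Fintype α] [Fintype β] {q : ℝ} (hq : q ≠ 0)
    (p : α → ℝ) (r : β → ℝ) (hp : IsDistribution p) (hr : IsDistribution r) :
    ∑ x : α × β, escort q (fun y : α × β => p y.1 * r y.2) x * Real.logb 2 (p x.1 * r x.2)
      = ∑ i, escort q p i * Real.logb 2 (p i) + ∑ j, escort q r j * Real.logb 2 (r j) := by
  have hterm : ∀ x : α × β,
      escort q (fun y : α × β => p y.1 * r y.2) x * Real.logb 2 (p x.1 * r x.2)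
        = escort q p x.1 * Real.logb 2 (p x.1) * escort q r x.2
          + escort q p x.1 * (escort q r x.2 * Real.logb 2 (r x.2)) := by
    intro x
    rw [escort_prod q p r hp.1 hr.1]
    -- The logarithm only splits for nonzero arguments; otherwise an escort weight vanishes.
    by_cases h1 : p x.1 = 0
    · simp [escort_eq_zero hq h1]
    by_cases h2 : r x.2 = 0
    · simp [escort_eq_zero hq h2]
    rw [Real.logb_mul h1 h2]
    ring
  simp only [hterm, Finset.sum_add_distrib, Fintype.sum_prod_type, ← Finset.sum_mul_sum,
    sum_escort q p hp, sum_escort q r hr, mul_one, one_mul]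

lemma hfun_add {q : ℝ} (hq : q ≠ 1) (x y : ℝ) :
    hfun q (x + y) = opq q (hfun q x) (hfun q y) := by
  have h : 1 - q ≠ 0 := sub_ne_zero.mpr hq.symm
  simp only [hfun, opq, if_neg hq, mul_add, Real.rpow_add (two_pos : (0 : ℝ) < 2)]
  field_simp
  ring

/-- for `q > 0`, `q ≠ 1`, the Jizba–Korbel entropy is `⊕_q`-additive
on direct products: `D̃_{nm}(P ⋆ Q) = D̃_n(P) ⊕_q D̃_m(Q)` for all `P ∈ Δ_n`,
`Q ∈ Δ_m`. -/
theorem stmt12 (q : ℝ) (hq0 : 0 < q) (hq1 : q ≠ 1) (n m : ℕ) (hn : 1 < n) (hm : 1 < m)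
    (p : Fin n → ℝ) (qd : Fin m → ℝ)
    (hp : IsDistribution p) (hqd : IsDistribution qd) :
    Djk q (fun x : Fin n × Fin m => p x.1 * qd x.2) = opq q (Djk q p) (Djk q qd) := by
  simp only [Djk]
  rw [sum_escort_logb_prod hq0.ne' p qd hp hqd, neg_add, hfun_add hq1]
end
end
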